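/- arXiv:math-ph/0610085 — 6 statements merged into one kernel-verified Lean document; each statement's English description precedes it below -/
import Mathlib

section
/- Let X be a topological space, Ω ⊆ X a subset, and n ≥ 2 a natural number. If the boundary of the closure of Ω is nonempty, then the Visser n-splitting Split(X, Ω, n) is not a Hausdorff topological space; more precisely, for any point x in the boundary of cl(Ω) and any two distinct indices i ≠ j, the two copies xᵢ and xⱼ of x cannot be separated: every open set containing xᵢ meets every open set containing xⱼ. -/
/-- The underlying set of the Visser n-splitting `Split(X, Ω, n)`: the disjoint union of
`X \ cl(Ω)` with `n` disjoint copies of the closure `cl(Ω)`. -/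
def VisserSplit (X : Type*) [TopologicalSpace X] (Ω : Set X) (n : ℕ) : Type _ :=
  {x : X // x ∉ closure Ω} ⊕ (Fin n × {x : X // x ∈ closure Ω})

open Classical in
/-- The i-th injection `φᵢ : X → Split(X, Ω, n)`, sending points of `X \ cl(Ω)` to themselves
and each point of `cl(Ω)` to its i-th copy. -/
noncomputable def visserEmb (X : Type*) [TopologicalSpace X] (Ω : Set X) (n : ℕ) (i : Fin n)
    (x : X) : VisserSplit X Ω n :=
  if h : x ∈ closure Ω then Sum.inr (i, ⟨x, h⟩) else Sum.inl ⟨x, h⟩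

/-- The natural topology of `Split(X, Ω, n)`: the one generated by the basis consisting of
all the sets `φᵢ(U)` with `U` open in `X` and `i ∈ {1, …, n}`. -/
noncomputable instance (X : Type*) [TopologicalSpace X] (Ω : Set X) (n : ℕ) :
    TopologicalSpace (VisserSplit X Ω n) :=
  TopologicalSpace.generateFrom
    {s | ∃ (i : Fin n) (U : Set X), IsOpen U ∧ s = visserEmb X Ω n i '' U}

theorem visserEmb_pos_aux (X : Type*) [TopologicalSpace X] (Ω : Set X) (n : ℕ)
    (i : Fin n) (x : X) (h : x ∈ closure Ω) :
    @Eq ({x : X // x ∉ closure Ω} ⊕ (Fin n × {x : X // x ∈ closure Ω}))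
      (visserEmb X Ω n i x) (Sum.inr (i, ⟨x, h⟩)) := dif_pos h

theorem visserEmb_neg_aux (X : Type*) [TopologicalSpace X] (Ω : Set X) (n : ℕ)
    (i : Fin n) (x : X) (h : x ∉ closure Ω) :
    @Eq ({x : X // x ∉ closure Ω} ⊕ (Fin n × {x : X // x ∈ closure Ω}))
      (visserEmb X Ω n i x) (Sum.inl ⟨x, h⟩) := dif_neg h

theorem visserEmb_eq_aux (X : Type*) [TopologicalSpace X] (Ω : Set X) (n : ℕ)
    (i j : Fin n) (x y : X) (hxy : visserEmb X Ω n i x = visserEmb X Ω n j y) :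
    x = y ∧ (y ∈ closure Ω → i = j) := by
  by_cases hx : x ∈ closure Ω <;> by_cases hy : y ∈ closure Ω
  · have h := (visserEmb_pos_aux X Ω n i x hx).symm.trans
      (Eq.trans hxy (visserEmb_pos_aux X Ω n j y hy))
    have h' := Sum.inr.inj h
    exact ⟨congrArg (fun p => p.2.1) h', fun _ => congrArg Prod.fst h'⟩
  · have h := (visserEmb_pos_aux X Ω n i x hx).symm.trans
      (Eq.trans hxy (visserEmb_neg_aux X Ω n j y hy))
    cases h
  · have h := (visserEmb_neg_aux X Ω n i x hx).symm.trans
      (Eq.trans hxy (visserEmb_pos_aux X Ω n j y hy))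
    cases h
  · have h := (visserEmb_neg_aux X Ω n i x hx).symm.trans
      (Eq.trans hxy (visserEmb_neg_aux X Ω n j y hy))
    exact ⟨congrArg Subtype.val (Sum.inl.inj h), fun h => absurd h hy⟩

theorem visserEmb_out_aux (X : Type*) [TopologicalSpace X] (Ω : Set X) (n : ℕ)
    (i j : Fin n) (x : X) (h : x ∉ closure Ω) : visserEmb X Ω n i x = visserEmb X Ω n j x :=
  (visserEmb_neg_aux X Ω n i x h).trans (visserEmb_neg_aux X Ω n j x h).symm

theorem visserEmb_continuous_aux (X : Type*) [TopologicalSpace X] (Ω : Set X) (n : ℕ)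
    (i : Fin n) : Continuous (visserEmb X Ω n i) := by
  refine continuous_generateFrom_iff.2 ?_
  rintro s ⟨k, U, hU, rfl⟩
  by_cases hk : k = i
  · subst hk
    have : visserEmb X Ω n k ⁻¹' (visserEmb X Ω n k '' U) = U := by
      apply Set.preimage_image_eq
      intro a b hab
      exact (visserEmb_eq_aux X Ω n _ _ _ _ hab).1
    rwa [this]
  · have : visserEmb X Ω n i ⁻¹' (visserEmb X Ω n k '' U) = U ∩ (closure Ω)ᶜ := by
      ext a
      constructor
      · rintro ⟨b, hb, hab⟩
        obtain ⟨h1, h2⟩ := visserEmb_eq_aux X Ω n _ _ _ _ hab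
        subst h1
        exact ⟨hb, fun h => hk (h2 h)⟩
      · rintro ⟨ha, hc⟩
        have hc' : a ∉ closure Ω := hc
        exact ⟨a, ha, visserEmb_out_aux X Ω n _ _ _ hc'⟩
    rw [this]
    exact hU.inter isClosed_closure.isOpen_compl

/-- If the boundary of `cl(Ω)` is nonempty and `n ≥ 2`, the Visser splitting `Split(X, Ω, n)`
is not Hausdorff; more precisely any two distinct copies `xᵢ`, `xⱼ` of a point
`x ∈ ∂(cl Ω)` cannot be separated by open sets. -/
theorem visserSplit_not_hausdorff (X : Type*) [TopologicalSpace X] (Ω : Set X) (n : ℕ)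
    (hn : 2 ≤ n) (hfr : (frontier (closure Ω)).Nonempty) :
    ¬ T2Space (VisserSplit X Ω n) ∧
    ∀ x ∈ frontier (closure Ω), ∀ i j : Fin n, i ≠ j →
      ∀ O₁ O₂ : Set (VisserSplit X Ω n), IsOpen O₁ → IsOpen O₂ →
        visserEmb X Ω n i x ∈ O₁ → visserEmb X Ω n j x ∈ O₂ → (O₁ ∩ O₂).Nonempty := by
  have key : ∀ x ∈ frontier (closure Ω), ∀ i j : Fin n, i ≠ j →
      ∀ O₁ O₂ : Set (VisserSplit X Ω n), IsOpen O₁ → IsOpen O₂ →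
        visserEmb X Ω n i x ∈ O₁ → visserEmb X Ω n j x ∈ O₂ → (O₁ ∩ O₂).Nonempty := by
    intro x hx i j _ O₁ O₂ h₁ h₂ hi hj
    have hx' : x ∈ closure (closure Ω)ᶜ := by
      rw [frontier_eq_closure_inter_closure] at hx
      exact hx.2
    obtain ⟨y, ⟨hy1, hy2⟩, hy⟩ := mem_closure_iff.1 hx' _
      ((h₁.preimage (visserEmb_continuous_aux X Ω n i)).inter
        (h₂.preimage (visserEmb_continuous_aux X Ω n j))) ⟨hi, hj⟩
    have hy' : y ∉ closure Ω := hy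
    have e : visserEmb X Ω n i y = visserEmb X Ω n j y := visserEmb_out_aux X Ω n _ _ _ hy'
    refine ⟨visserEmb X Ω n i y, hy1, ?_⟩
    rw [e]
    exact hy2
  refine ⟨?_, key⟩
  intro hT
  obtain ⟨x, hx⟩ := hfr
  have hxc : x ∈ closure Ω := isClosed_closure.frontier_subset hx
  have hij : (⟨0, by omega⟩ : Fin n) ≠ ⟨1, by omega⟩ := by simp
  have hne : visserEmb X Ω n ⟨0, by omega⟩ x ≠ visserEmb X Ω n ⟨1, by omega⟩ x := by
    intro h
    exact hij ((visserEmb_eq_aux X Ω n _ _ _ _ h).2 hxc)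
  obtain ⟨u, v, hu, hv, h0, h1, hd⟩ := t2_separation hne
  obtain ⟨z, hz⟩ := key x hx _ _ hij u v hu hv h0 h1
  exact Set.disjoint_left.1 hd hz.1 hz.2
end

section
/- Let X be a Hausdorff topological space, Ω ⊆ X a subset, and n ≥ 2 a natural number. Let ∼ be the equivalence relation on Split(X, Ω, n) generated by identifying, for all i ≠ j, the i-th copy xᵢ and the j-th copy xⱼ of each point x lying in the boundary of Ω. Then the McCabe splitting, namely the quotient topological space Split(X, Ω, n)/∼ with the quotient topology, is Hausdorff. -/
/-- The McCabe equivalence relation on `Split(X, Ω, n)`: the equivalence relation generated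
by identifying, for `i ≠ j`, the i-th copy `xᵢ` and the j-th copy `xⱼ` of each point `x`
lying in the boundary of `Ω`. -/
def mcCabeSetoid (X : Type*) [TopologicalSpace X] (Ω : Set X) (n : ℕ) :
    Setoid (VisserSplit X Ω n) :=
  Relation.EqvGen.setoid (fun a b => ∃ (x : X) (hx : x ∈ closure Ω) (i j : Fin n), i ≠ j ∧
    x ∈ frontier Ω ∧ a = Sum.inr (i, ⟨x, hx⟩) ∧ b = Sum.inr (j, ⟨x, hx⟩))

/-- The underlying point. -/
def visserPt (X : Type*) [TopologicalSpace X] (Ω : Set X) (n : ℕ) : VisserSplit X Ω n → X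
  | Sum.inl x => x.1
  | Sum.inr p => p.2.1

lemma visserEmb_inl (X : Type*) [TopologicalSpace X] (Ω : Set X) (n : ℕ) (i : Fin n)
    (x : {x : X // x ∉ closure Ω}) :
    visserEmb X Ω n i x.1 = Sum.inl x := by
  exact dif_neg x.2

lemma visserEmb_inr (X : Type*) [TopologicalSpace X] (Ω : Set X) (n : ℕ) (i : Fin n)
    (x : {x : X // x ∈ closure Ω}) :
    visserEmb X Ω n i x.1 = Sum.inr (i, x) := by
  exact dif_pos x.2

lemma visserPt_emb (X : Type*) [TopologicalSpace X] (Ω : Set X) (n : ℕ) (i : Fin n) (x : X) :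
    visserPt X Ω n (visserEmb X Ω n i x) = x := by
  by_cases h : x ∈ closure Ω
  · exact congrArg (visserPt X Ω n) (visserEmb_inr X Ω n i ⟨x, h⟩)
  · exact congrArg (visserPt X Ω n) (visserEmb_inl X Ω n i ⟨x, h⟩)

lemma visserEmb_open (X : Type*) [TopologicalSpace X] (Ω : Set X) (n : ℕ) (i : Fin n)
    (U : Set X) (hU : IsOpen U) : IsOpen (visserEmb X Ω n i '' U) :=
  TopologicalSpace.isOpen_generateFrom_of_mem ⟨i, U, hU, rfl⟩

lemma visserPt_cont (X : Type*) [TopologicalSpace X] (Ω : Set X) (n : ℕ) (hn : 2 ≤ n) :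
    Continuous (visserPt X Ω n) := by
  refine ⟨fun U hU => ?_⟩
  have : visserPt X Ω n ⁻¹' U = ⋃ i, visserEmb X Ω n i '' U := by
    ext a
    simp only [Set.mem_preimage, Set.mem_iUnion]
    constructor
    · intro ha
      rcases a with x | ⟨i, x⟩
      · exact ⟨⟨0, by omega⟩, x.1, ha, visserEmb_inl ..⟩
      · exact ⟨i, x.1, ha, visserEmb_inr ..⟩
    · rintro ⟨i, x, hx, rfl⟩
      rwa [visserPt_emb]
  rw [this]
  exact isOpen_iUnion fun i => visserEmb_open X Ω n i U hU

lemma mcCabe_inv {X : Type*} [TopologicalSpace X] {Ω : Set X} {n : ℕ} {β : Type*}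
    (g : VisserSplit X Ω n → β)
    (hg : ∀ (x : X) (hx : x ∈ closure Ω) (i j : Fin n), x ∈ frontier Ω →
      g (Sum.inr (i, ⟨x, hx⟩)) = g (Sum.inr (j, ⟨x, hx⟩)))
    (a b : VisserSplit X Ω n) (h : (mcCabeSetoid X Ω n) a b) : g a = g b := by
  change Relation.EqvGen _ a b at h
  induction h with
  | rel a b h =>
    obtain ⟨x, hx, i, j, -, hf, rfl, rfl⟩ := h
    exact hg x hx i j hf
  | refl => rfl
  | symm _ _ _ ih => exact ih.symm
  | trans _ _ _ _ _ ih1 ih2 => exact ih1.trans ih2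

lemma mcCabe_inv_int {X : Type*} [TopologicalSpace X] {Ω : Set X} {n : ℕ} (k : Fin n)
    (a b : VisserSplit X Ω n) (h : (mcCabeSetoid X Ω n) a b) :
    (a ∈ visserEmb X Ω n k '' interior Ω) = (b ∈ visserEmb X Ω n k '' interior Ω) := by
  refine mcCabe_inv (fun a => a ∈ visserEmb X Ω n k '' interior Ω) ?_ a b h
  have key : ∀ (x : X) (hx : x ∈ closure Ω) (i : Fin n), x ∈ frontier Ω →
      ¬ ((Sum.inr (i, ⟨x, hx⟩) : VisserSplit X Ω n) ∈ visserEmb X Ω n k '' interior Ω) := by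
    rintro x hx i hf ⟨y, hy, he⟩
    have := congrArg (visserPt X Ω n) he
    rw [visserPt_emb] at this
    change y = x at this
    subst this
    exact hf.2 hy
  intro x hx i j hf
  exact propext (iff_of_false (key x hx i hf) (key x hx j hf))

/-- If `X` is Hausdorff and `n ≥ 2`, the McCabe n-splitting of `X` through `Ω`, i.e. the
quotient of the Visser splitting `Split(X, Ω, n)` by the identification of the copies of the
boundary points of `Ω`, endowed with the quotient topology, is Hausdorff. -/
theorem mcCabeSplit_t2Space (X : Type*) [TopologicalSpace X] [T2Space X] (Ω : Set X)
    (n : ℕ) (hn : 2 ≤ n) : T2Space (Quotient (mcCabeSetoid X Ω n)) := by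
  let f : Quotient (mcCabeSetoid X Ω n) → X :=
    Quotient.lift (visserPt X Ω n) (mcCabe_inv _ (fun _ _ _ _ _ => rfl))
  have hf : Continuous f := (visserPt_cont X Ω n hn).quotient_lift _
  let S : Fin n → Set (Quotient (mcCabeSetoid X Ω n)) := fun k =>
    {q | Quotient.lift (fun a => a ∈ visserEmb X Ω n k '' interior Ω) (mcCabe_inv_int k) q}
  have hS : ∀ k, IsOpen (S k) := fun k =>
    isOpen_coinduced.2 (visserEmb_open X Ω n k _ isOpen_interior)
  refine ⟨fun a b hab => ?_⟩
  by_cases h : f a = f b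
  · induction a using Quotient.inductionOn with | _ a => ?_
    induction b using Quotient.inductionOn with | _ b => ?_
    change visserPt X Ω n a = visserPt X Ω n b at h
    rcases a with x | ⟨i, x⟩ <;> rcases b with y | ⟨j, y⟩
    · exact absurd (by rw [Subtype.ext h]) hab
    · change x.1 = y.1 at h
      exact absurd (h ▸ y.2) x.2
    · change x.1 = y.1 at h
      exact absurd (h ▸ x.2) y.2
    · obtain rfl : x = y := Subtype.ext h
      have hij : i ≠ j := by rintro rfl; exact hab rfl
      have hx : x.1 ∈ interior Ω := by
        by_contra hx
        exact hab (Quotient.sound (Relation.EqvGen.rel _ _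
          ⟨x.1, x.2, i, j, hij, ⟨x.2, hx⟩, rfl, rfl⟩))
      refine ⟨S i, S j, hS i, hS j, ⟨x.1, hx, visserEmb_inr ..⟩, ⟨x.1, hx, visserEmb_inr ..⟩, ?_⟩
      rw [Set.disjoint_left]
      intro q
      induction q using Quotient.inductionOn with | _ q => ?_
      rintro ⟨y, hy, hy'⟩ ⟨z, hz, hz'⟩
      have e := hy'.trans hz'.symm
      rw [visserEmb_inr X Ω n i ⟨y, subset_closure (interior_subset hy)⟩,
        visserEmb_inr X Ω n j ⟨z, subset_closure (interior_subset hz)⟩] at e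
      exact hij (congrArg Prod.fst (Sum.inr.inj e))
  · obtain ⟨u, v, hu, hv, hau, hbv, huv⟩ := t2_separation h
    exact ⟨f ⁻¹' u, f ⁻¹' v, hu.preimage hf, hv.preimage hf, hau, hbv, huv.preimage f⟩
end

section
/- Let f : ℝ → ℝ be smooth (C^∞), let a, b ∈ ℝ, and suppose there exists a global solution x̃ₐ of ẋ = f(x) with x̃ₐ(0) = a. Then there exists a pair of global solutions g₁, g₂ of ẋ = f(x) with g₁(t) = g₂(t) for all t < 0, g₁(0) = a and g₂(0) = b, if and only if a = b; in that case the pair is unique and g₁ = g₂ = x̃ₐ. (This expresses that on the Visser splitting Split(ℝ, [0, +∞), 2) the generalized Cauchy problem with the two initial conditions x(0₁) = a, x(0₂) = b imposed at the two copies of the splitting point is well-posed if and only if the consistency condition a = b holds.) -/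
/-- `g : ℝ → ℝ` is a global solution of the autonomous ODE `ẋ = f(x)`:
it is differentiable at every `t` with derivative `g'(t) = f(g(t))`. -/
def IsGlobalSolution (f g : ℝ → ℝ) : Prop := ∀ t : ℝ, HasDerivAt g (f (g t)) t

theorem global_solution_unique (f : ℝ → ℝ) (hf : ContDiff ℝ (⊤ : ℕ∞) f) (u v : ℝ → ℝ)
    (hu : IsGlobalSolution f u) (hv : IsGlobalSolution f v) (h0 : u 0 = v 0) : ∀ t, u t = v t := by
  have cu : Continuous u := continuous_iff_continuousAt.2 fun t => (hu t).continuousAt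
  have cv : Continuous v := continuous_iff_continuousAt.2 fun t => (hv t).continuousAt
  have hcl : IsClosed {t | u t = v t} := isClosed_eq cu cv
  have hop : IsOpen {t | u t = v t} := by
    rw [isOpen_iff_mem_nhds]
    intro t ht
    have ht' : u t = v t := ht
    have h1 : ContDiffAt ℝ 1 f (u t) :=
      (hf.of_le (by exact_mod_cast le_top)).contDiffAt
    obtain ⟨K, s, hs, hK⟩ := h1.exists_lipschitzOnWith
    have e1 : ∀ᶠ r in nhds t, u r ∈ s := cu.continuousAt hs
    have e2 : ∀ᶠ r in nhds t, v r ∈ s := cv.continuousAt (ht' ▸ hs)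
    exact ODE_solution_unique_of_eventually (v := fun _ => f) (s := fun _ => s) (K := K)
      (Filter.Eventually.of_forall fun _ => hK)
      (e1.mono fun r hr => ⟨hu r, hr⟩) (e2.mono fun r hr => ⟨hv r, hr⟩) ht'
  have := IsClopen.eq_univ ⟨hcl, hop⟩ ⟨0, h0⟩
  intro t
  have h : t ∈ {t | u t = v t} := this ▸ Set.mem_univ t
  exact h

/-- On the Visser splitting `Split(ℝ, [0,+∞), 2)`, the generalized Cauchy problem with the
two initial conditions `x(0₁) = a`, `x(0₂) = b` imposed at the two copies of the splitting
point is well-posed if and only if the consistency condition `a = b` holds; in that case the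
pair of branch solutions is unique, both branches coinciding with the ordinary solution
`xa` with `xa(0) = a`. -/
theorem generalized_cauchy_split_ray (f : ℝ → ℝ) (hf : ContDiff ℝ (⊤ : ℕ∞) f) (a b : ℝ)
    (xa : ℝ → ℝ) (hxa : IsGlobalSolution f xa) (hxa0 : xa 0 = a) :
    ((∃ g₁ g₂ : ℝ → ℝ, IsGlobalSolution f g₁ ∧ IsGlobalSolution f g₂ ∧
        (∀ t : ℝ, t < 0 → g₁ t = g₂ t) ∧ g₁ 0 = a ∧ g₂ 0 = b) ↔ a = b) ∧
    (a = b → ∀ g₁ g₂ : ℝ → ℝ, IsGlobalSolution f g₁ → IsGlobalSolution f g₂ →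
      (∀ t : ℝ, t < 0 → g₁ t = g₂ t) → g₁ 0 = a → g₂ 0 = b →
      (∀ t : ℝ, g₁ t = xa t) ∧ (∀ t : ℝ, g₂ t = xa t)) := by
  refine ⟨⟨?_, ?_⟩, ?_⟩
  · rintro ⟨g₁, g₂, h₁, h₂, heq, ha, hb⟩
    have c1 : Filter.Tendsto g₁ (nhdsWithin 0 (Set.Iio 0)) (nhds (g₁ 0)) :=
      (h₁ 0).continuousAt.tendsto.mono_left nhdsWithin_le_nhds
    have c2 : Filter.Tendsto g₂ (nhdsWithin 0 (Set.Iio 0)) (nhds (g₂ 0)) :=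
      (h₂ 0).continuousAt.tendsto.mono_left nhdsWithin_le_nhds
    have c3 := tendsto_nhds_unique_of_eventuallyEq c1 c2
      (Filter.eventually_of_mem self_mem_nhdsWithin fun t ht => heq t ht)
    rw [← ha, ← hb, c3]
  · rintro rfl
    exact ⟨xa, xa, hxa, hxa, fun _ _ => rfl, hxa0, hxa0⟩
  · rintro rfl g₁ g₂ h₁ h₂ - ha hb
    exact ⟨global_solution_unique f hf g₁ xa h₁ hxa (ha.trans hxa0.symm),
      global_solution_unique f hf g₂ xa h₂ hxa (hb.trans hxa0.symm)⟩
end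

section
/- Let f : ℝ → ℝ be smooth (C^∞), let x̃ be a global solution of ẋ = f(x), and let t_in ≥ 0. If g₁ and g₂ are global solutions of ẋ = f(x) such that g₁(t) = g₂(t) for all t < 0 and g₁(t_in) = x̃(t_in), then g₁ = g₂ = x̃ everywhere on ℝ. (This expresses that on the Visser splitting Split(ℝ, [0, +∞), 2) the Cauchy problem with initial time on the first future branch is well-posed: the solution on the first branch allows retrodiction on the common past (−∞, 0), from which the solution on the second branch is determined.) -/
theorem globalSolution_unique_aux {f g h : ℝ → ℝ} (hf : ContDiff ℝ (⊤ : ℕ∞) f)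
    (hg : IsGlobalSolution f g) (hh : IsGlobalSolution f h) {t₀ : ℝ} (h0 : g t₀ = h t₀) :
    ∀ t, g t = h t := by
  have cg : Continuous g := continuous_iff_continuousAt.2 fun t => (hg t).continuousAt
  have ch : Continuous h := continuous_iff_continuousAt.2 fun t => (hh t).continuousAt
  have hclosed : IsClosed {t | g t = h t} := isClosed_eq cg ch
  have hopen : IsOpen {t | g t = h t} := by
    rw [isOpen_iff_mem_nhds]
    intro t ht
    have hft : ContDiffAt ℝ 1 f (g t) := (hf.of_le (by exact_mod_cast le_top)).contDiffAt
    obtain ⟨K, s, hs, hK⟩ := hft.exists_lipschitzOnWith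
    have hs2 : s ∈ nhds (h t) := by
      have e : g t = h t := ht
      rwa [← e]
    exact ODE_solution_unique_of_eventually (v := fun _ => f) (s := fun _ => s) (K := K)
      (Filter.Eventually.of_forall fun _ => hK)
      ((cg.continuousAt.eventually_mem hs).mono fun u hu => ⟨hg u, hu⟩)
      ((ch.continuousAt.eventually_mem hs2).mono fun u hu => ⟨hh u, hu⟩) ht
  have := IsClopen.eq_univ ⟨hclosed, hopen⟩ ⟨t₀, h0⟩
  intro t
  have ht : t ∈ {t | g t = h t} := this ▸ Set.mem_univ t
  exact ht

/-- Well-posedness of the Cauchy problem on the Visser splitting `Split(ℝ, [0,+∞), 2)` of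
time with initial time `t_in ≥ 0` on the first future branch: an ℝ-valued function on the
splitting is a pair `(g₁, g₂)` of global solutions agreeing on `(−∞, 0)`; if the first
branch matches the ordinary solution `xT` at `t_in`, then both branch functions coincide
with `xT` everywhere (retrodiction on the common past determines the second branch). -/
theorem cauchy_wellPosed_initial_after_split (f : ℝ → ℝ) (hf : ContDiff ℝ (⊤ : ℕ∞) f)
    (xT g₁ g₂ : ℝ → ℝ) (hx : IsGlobalSolution f xT)
    (hg₁ : IsGlobalSolution f g₁) (hg₂ : IsGlobalSolution f g₂)
    (t_in : ℝ) (ht : 0 ≤ t_in) (hagree : ∀ t : ℝ, t < 0 → g₁ t = g₂ t)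
    (hinit : g₁ t_in = xT t_in) :
    (∀ t : ℝ, g₁ t = xT t) ∧ (∀ t : ℝ, g₂ t = xT t) := by
  have h1 := globalSolution_unique_aux hf hg₁ hx hinit
  have h2 := globalSolution_unique_aux hf hg₁ hg₂ (hagree (-1) (by norm_num))
  exact ⟨h1, fun t => (h2 t).symm.trans (h1 t)⟩
end

section
/- Let f : ℝ → ℝ be smooth (C^∞), let τ ∈ ℝ, let b ≥ 2, let a₁, …, a_b ∈ ℝ, and suppose there exists a global solution x̃ of ẋ = f(x) with x̃(τ) = a₁. Then there exist global solutions g₁, …, g_b of ẋ = f(x) such that g_k(t) = g_l(t) for all t < τ and all k, l, and g_k(τ) = a_k for each k, if and only if a₁ = a₂ = ⋯ = a_b. (This expresses that on a temporal tree the generalized Cauchy problem prescribing the b initial values a₁, …, a_b at the b copies of a time-division point τ is well-posed if and only if all the prescribed values are identical.) -/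
/-- On a temporal tree, the generalized Cauchy problem prescribing the `b` initial values
`a₁, …, a_b` at the `b` copies of a time-division point `τ` — i.e. asking for `b` branch
global solutions agreeing on the common past `(−∞, τ)` with `g_k(τ) = a_k` — is well-posed
if and only if all the prescribed values are identical (given that some global solution `xT`
realizes the first value `a₁` at `τ`). -/
theorem generalized_cauchy_time_division (f : ℝ → ℝ) (hf : ContDiff ℝ (⊤ : ℕ∞) f)
    (τ : ℝ) (b : ℕ) (hb : 2 ≤ b) (a : Fin b → ℝ)
    (xT : ℝ → ℝ) (hx : IsGlobalSolution f xT) (hxτ : xT τ = a ⟨0, by omega⟩) :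
    (∃ g : Fin b → ℝ → ℝ, (∀ k : Fin b, IsGlobalSolution f (g k)) ∧
      (∀ k l : Fin b, ∀ t : ℝ, t < τ → g k t = g l t) ∧
      (∀ k : Fin b, g k τ = a k)) ↔ (∀ k l : Fin b, a k = a l) := by
  constructor
  · rintro ⟨g, hg, hpast, hval⟩ k l
    have hk : Filter.Tendsto (g k) (nhdsWithin τ (Set.Iio τ)) (nhds (a k)) := by
      rw [← hval k]
      exact (hg k τ).continuousAt.tendsto.mono_left nhdsWithin_le_nhds
    have hl : Filter.Tendsto (g l) (nhdsWithin τ (Set.Iio τ)) (nhds (a l)) := by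
      rw [← hval l]
      exact (hg l τ).continuousAt.tendsto.mono_left nhdsWithin_le_nhds
    refine tendsto_nhds_unique_of_eventuallyEq hk hl ?_
    filter_upwards [self_mem_nhdsWithin] with t ht
    exact hpast k l t ht
  · intro h
    exact ⟨fun _ => xT, fun _ => hx, fun _ _ _ _ => rfl, fun k => hxτ.trans (h _ k)⟩
end

section
/- Let f : ℝ → ℝ be smooth (C^∞), let t_in ≤ 0, let a₁, a₂ ∈ ℝ, and suppose there exists a global solution x̃ of ẋ = f(x) with x̃(t_in) = a₁. Then there exist global solutions g₁, g₂ of ẋ = f(x) with g₁(t) = g₂(t) for all t > 0, g₁(t_in) = a₁ and g₂(t_in) = a₂, if and only if a₁ = a₂; in that case g₁ = g₂ = x̃. (This expresses that on the Visser splitting Split(ℝ, (−∞, 0], 2), in which two disjoint past branches merge at time 0 — a time-sticking — the generalized Cauchy problem prescribing the value a₁ at time t_in on the first past branch and a₂ at time t_in on the second past branch is well-posed if and only if a₁ = a₂, this being necessary and sufficient for the merging of the solutions of the two branches on (0, +∞).) -/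
theorem IsGlobalSolution.unique_of_eq {f : ℝ → ℝ} (hf : ContDiff ℝ (⊤ : ℕ∞) f) {g h : ℝ → ℝ}
    (hg : IsGlobalSolution f g) (hh : IsGlobalSolution f h) {t₀ : ℝ} (h0 : g t₀ = h t₀) :
    g = h := by
  have hgc : Continuous g := continuous_iff_continuousAt.2 fun t => (hg t).continuousAt
  have hhc : Continuous h := continuous_iff_continuousAt.2 fun t => (hh t).continuousAt
  have hclosed : IsClosed {t | g t = h t} := isClosed_eq hgc hhc
  have hopen : IsOpen {t | g t = h t} := by
    rw [isOpen_iff_mem_nhds]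
    intro t (ht : g t = h t)
    have hf1 : ContDiffAt ℝ 1 f (g t) := (hf.of_le (by norm_cast)).contDiffAt
    obtain ⟨K, s, hs, hK⟩ := hf1.exists_lipschitzOnWith
    have e1 : ∀ᶠ u in nhds t, g u ∈ s := hgc.continuousAt.eventually_mem hs
    have e2 : ∀ᶠ u in nhds t, h u ∈ s := hhc.continuousAt.eventually_mem (ht ▸ hs)
    exact ODE_solution_unique_of_eventually (v := fun _ => f) (s := fun _ => s)
      (Filter.Eventually.of_forall fun _ => hK)
      (e1.mono fun u hu => ⟨hg u, hu⟩) (e2.mono fun u hu => ⟨hh u, hu⟩) ht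
  have huniv := IsClopen.eq_univ ⟨hclosed, hopen⟩ ⟨t₀, h0⟩
  funext t
  have : t ∈ {t | g t = h t} := huniv ▸ Set.mem_univ t
  exact this

/-- On the Visser splitting `Split(ℝ, (−∞, 0], 2)` — a time-sticking where two disjoint past
branches merge at time `0` — the generalized Cauchy problem prescribing the value `a₁` at
time `t_in ≤ 0` on the first past branch and `a₂` at time `t_in` on the second past branch
is well-posed if and only if `a₁ = a₂`; in that case both branch solutions coincide with the
ordinary solution `xT` with `xT(t_in) = a₁`. -/
theorem generalized_cauchy_time_sticking (f : ℝ → ℝ) (hf : ContDiff ℝ (⊤ : ℕ∞) f)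
    (t_in : ℝ) (ht : t_in ≤ 0) (a₁ a₂ : ℝ)
    (xT : ℝ → ℝ) (hx : IsGlobalSolution f xT) (hx1 : xT t_in = a₁) :
    ((∃ g₁ g₂ : ℝ → ℝ, IsGlobalSolution f g₁ ∧ IsGlobalSolution f g₂ ∧
        (∀ t : ℝ, 0 < t → g₁ t = g₂ t) ∧ g₁ t_in = a₁ ∧ g₂ t_in = a₂) ↔ a₁ = a₂) ∧
    (a₁ = a₂ → ∀ g₁ g₂ : ℝ → ℝ, IsGlobalSolution f g₁ → IsGlobalSolution f g₂ →
      (∀ t : ℝ, 0 < t → g₁ t = g₂ t) → g₁ t_in = a₁ → g₂ t_in = a₂ →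
      (∀ t : ℝ, g₁ t = xT t) ∧ (∀ t : ℝ, g₂ t = xT t)) := by
  refine ⟨⟨?_, ?_⟩, ?_⟩
  · rintro ⟨g₁, g₂, h1, h2, h, e1, e2⟩
    rw [← e1, ← e2, h1.unique_of_eq hf h2 (h 1 one_pos)]
  · intro h
    exact ⟨xT, xT, hx, hx, fun _ _ => rfl, hx1, hx1.trans h⟩
  · intro h g₁ g₂ h1 h2 _ e1 e2
    exact ⟨fun t => congrFun (h1.unique_of_eq hf hx (e1.trans hx1.symm)) t,
      fun t => congrFun (h2.unique_of_eq hf hx (e2.trans (h.symm.trans hx1.symm))) t⟩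
end
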